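/- arXiv:2103.00277 — 5 statements merged into one kernel-verified Lean document; each statement's English description precedes it below -/
import Mathlib

section
/- For every n ≥ 0, the matrix C_n produced by the linear UKI covariance iteration is symmetric positive definite, and its inverse satisfies the closed formula C_n⁻¹ = (1 − 2⁻ⁿ) Gᵀ Σ_η⁻¹ G + 2⁻ⁿ C_0⁻¹. -/
open Matrix

theorem uki_step {m k : ℕ} (G : Matrix (Fin k) (Fin m) ℝ)
    (S : Matrix (Fin k) (Fin k) ℝ) (hS : S.PosDef)
    (A : Matrix (Fin m) (Fin m) ℝ) (hA : A.PosDef) :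
    (A - A * Gᵀ * (G * A * Gᵀ + S)⁻¹ * G * A).PosDef ∧
    (A - A * Gᵀ * (G * A * Gᵀ + S)⁻¹ * G * A)⁻¹ = A⁻¹ + Gᵀ * S⁻¹ * G := by
  have h1 : (G * A * Gᵀ).PosSemidef := by
    simpa [conjTranspose_eq_transpose_of_trivial] using hA.posSemidef.mul_mul_conjTranspose_same G
  have h2 : (Gᵀ * S⁻¹ * G).PosSemidef := by
    simpa [conjTranspose_eq_transpose_of_trivial] using
      hS.inv.posSemidef.conjTranspose_mul_mul_same G
  have h3 : (A⁻¹ + Gᵀ * S⁻¹ * G).PosDef := hA.inv.add_posSemidef h2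
  have h4 : (S + G * A * Gᵀ).PosDef := hS.add_posSemidef h1
  have eA : A⁻¹⁻¹ = A := nonsing_inv_nonsing_inv _ ((isUnit_iff_isUnit_det _).1 hA.isUnit)
  have eS : S⁻¹⁻¹ = S := nonsing_inv_nonsing_inv _ ((isUnit_iff_isUnit_det _).1 hS.isUnit)
  have key := add_mul_mul_inv_eq_sub A⁻¹ Gᵀ S⁻¹ G hA.inv.isUnit hS.inv.isUnit
    (by rw [eA, eS]; exact h4.isUnit)
  rw [eA, eS, add_comm S] at key
  rw [← key]
  exact ⟨h3.inv, nonsing_inv_nonsing_inv _ ((isUnit_iff_isUnit_det _).1 h3.isUnit)⟩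

theorem uki_inv_two {m : ℕ} (A : Matrix (Fin m) (Fin m) ℝ) (hA : A.PosDef) :
    ((2 : ℝ) • A)⁻¹ = (2 : ℝ)⁻¹ • A⁻¹ := by
  have := (isUnit_iff_isUnit_det _).1 hA.isUnit
  apply inv_eq_right_inv
  rw [smul_mul_smul_comm, mul_nonsing_inv _ this]
  norm_num

/-- **Closed formula for the linear UKI covariance iteration.** With hyperparameters
`Σ_ω = C_n`, `Σ_ν = 2Σ_η`, i.e. `Ĉ_{n+1} = 2 C_n` and
`C_{n+1} = Ĉ_{n+1} − Ĉ_{n+1} Gᵀ (G Ĉ_{n+1} Gᵀ + 2Σ_η)⁻¹ G Ĉ_{n+1}`, each `C_n` is symmetric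
positive definite and `C_n⁻¹ = (1 − 2⁻ⁿ) Gᵀ Σ_η⁻¹ G + 2⁻ⁿ C_0⁻¹`. -/
theorem linear_uki_covariance_closed_formula {Nθ Ny : ℕ}
    (G : Matrix (Fin Ny) (Fin Nθ) ℝ)
    (Sη : Matrix (Fin Ny) (Fin Ny) ℝ) (hSη : Sη.PosDef)
    (C : ℕ → Matrix (Fin Nθ) (Fin Nθ) ℝ) (hC0 : (C 0).PosDef)
    (hrec : ∀ n, C (n + 1) =
      (2 : ℝ) • C n -
        ((2 : ℝ) • C n) * Gᵀ * (G * ((2 : ℝ) • C n) * Gᵀ + (2 : ℝ) • Sη)⁻¹ * G *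
          ((2 : ℝ) • C n)) :
    ∀ n, (C n).PosDef ∧
      (C n)⁻¹ = (1 - (2 : ℝ)⁻¹ ^ n) • (Gᵀ * Sη⁻¹ * G) + (2 : ℝ)⁻¹ ^ n • (C 0)⁻¹ := by
  intro n
  induction n with
  | zero => exact ⟨hC0, by simp⟩
  | succ n ih =>
    obtain ⟨hp, hi⟩ := ih
    obtain ⟨a, b⟩ := uki_step G ((2 : ℝ) • Sη) (hSη.smul (by norm_num)) ((2 : ℝ) • C n)
      (hp.smul (by norm_num))
    rw [← hrec n] at a b
    refine ⟨a, ?_⟩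
    rw [b, uki_inv_two _ hp, uki_inv_two _ hSη, hi, Matrix.mul_smul, Matrix.smul_mul, pow_succ]
    module
end

section
/- The precision matrices of the linear UKI covariance iteration converge exponentially fast to the posterior precision matrix with an uninformative prior: for every n ≥ 0 one has C_n⁻¹ − Gᵀ Σ_η⁻¹ G = 2⁻ⁿ (C_0⁻¹ − Gᵀ Σ_η⁻¹ G); in particular C_n⁻¹ converges to Gᵀ Σ_η⁻¹ G as n → ∞, with error decaying like 2⁻ⁿ in any matrix norm. -/
open Matrix Filter

lemma uki_step_s3 {Nθ Ny : ℕ}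
    (G : Matrix (Fin Ny) (Fin Nθ) ℝ)
    (R : Matrix (Fin Ny) (Fin Ny) ℝ) (hR : R.PosDef)
    (P : Matrix (Fin Nθ) (Fin Nθ) ℝ) (hP : P.PosDef) :
    (P - P * Gᵀ * (G * P * Gᵀ + R)⁻¹ * G * P).PosDef ∧
    (P - P * Gᵀ * (G * P * Gᵀ + R)⁻¹ * G * P)⁻¹ = P⁻¹ + Gᵀ * R⁻¹ * G := by
  have hM : (R + G * P * Gᵀ).PosDef := by
    have h := hP.posSemidef.mul_mul_conjTranspose_same G
    rw [conjTranspose_eq_transpose_of_trivial] at h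
    exact hR.add_posSemidef h
  have hQ : (P⁻¹ + Gᵀ * R⁻¹ * G).PosDef := by
    have h := hR.inv.posSemidef.conjTranspose_mul_mul_same G
    rw [conjTranspose_eq_transpose_of_trivial] at h
    exact hP.inv.add_posSemidef h
  have hPP : P⁻¹⁻¹ = P := nonsing_inv_nonsing_inv P ((isUnit_iff_isUnit_det P).1 hP.isUnit)
  have hRR : R⁻¹⁻¹ = R := nonsing_inv_nonsing_inv R ((isUnit_iff_isUnit_det R).1 hR.isUnit)
  have key := add_mul_mul_inv_eq_sub (A := P⁻¹) (U := Gᵀ) (C := R⁻¹) (V := G)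
    hP.inv.isUnit hR.inv.isUnit (by rw [hPP, hRR]; exact hM.isUnit)
  rw [hPP, hRR, add_comm R] at key
  rw [← key]
  exact ⟨hQ.inv, nonsing_inv_nonsing_inv _ ((isUnit_iff_isUnit_det _).1 hQ.isUnit)⟩

/-- **Exponential convergence of the linear UKI precision matrices.** For the linear UKI
covariance iteration (with `Σ_ω = C_n`, `Σ_ν = 2Σ_η`), the precision matrices satisfy
`C_n⁻¹ − Gᵀ Σ_η⁻¹ G = 2⁻ⁿ (C_0⁻¹ − Gᵀ Σ_η⁻¹ G)` for every `n`; in particular `C_n⁻¹`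
converges to the posterior precision matrix `Gᵀ Σ_η⁻¹ G` as `n → ∞`. -/
theorem linear_uki_precision_exponential_convergence {Nθ Ny : ℕ}
    (G : Matrix (Fin Ny) (Fin Nθ) ℝ)
    (Sη : Matrix (Fin Ny) (Fin Ny) ℝ) (hSη : Sη.PosDef)
    (C : ℕ → Matrix (Fin Nθ) (Fin Nθ) ℝ) (hC0 : (C 0).PosDef)
    (hrec : ∀ n, C (n + 1) =
      (2 : ℝ) • C n -
        ((2 : ℝ) • C n) * Gᵀ * (G * ((2 : ℝ) • C n) * Gᵀ + (2 : ℝ) • Sη)⁻¹ * G *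
          ((2 : ℝ) • C n)) :
    (∀ n, (C n)⁻¹ - Gᵀ * Sη⁻¹ * G = (2 : ℝ)⁻¹ ^ n • ((C 0)⁻¹ - Gᵀ * Sη⁻¹ * G)) ∧
      Tendsto (fun n => (C n)⁻¹) atTop (nhds (Gᵀ * Sη⁻¹ * G)) := by
  have hinv2 : ∀ {k : ℕ} (A : Matrix (Fin k) (Fin k) ℝ), A.PosDef →
      ((2 : ℝ) • A)⁻¹ = (2 : ℝ)⁻¹ • A⁻¹ := by
    intro k A hA
    apply inv_eq_left_inv
    rw [smul_mul_smul_comm, nonsing_inv_mul A ((isUnit_iff_isUnit_det A).1 hA.isUnit)]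
    norm_num
  have hstep : ∀ n, (C n).PosDef → (C (n+1)).PosDef ∧
      (C (n+1))⁻¹ = (2 : ℝ)⁻¹ • (C n)⁻¹ + (2 : ℝ)⁻¹ • (Gᵀ * Sη⁻¹ * G) := by
    intro n hn
    have h := uki_step_s3 G ((2 : ℝ) • Sη) (hSη.smul two_pos) ((2 : ℝ) • C n) (hn.smul two_pos)
    rw [← hrec n, hinv2 _ hn, hinv2 _ hSη] at h
    simpa using h
  have hpos : ∀ n, (C n).PosDef := by
    intro n
    induction n with
    | zero => exact hC0
    | succ n ih => exact (hstep n ih).1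
  have main : ∀ n, (C n)⁻¹ - Gᵀ * Sη⁻¹ * G =
      (2 : ℝ)⁻¹ ^ n • ((C 0)⁻¹ - Gᵀ * Sη⁻¹ * G) := by
    intro n
    induction n with
    | zero => simp
    | succ n ih =>
      rw [pow_succ', mul_smul, ← ih, (hstep n (hpos n)).2]
      module
  refine ⟨main, ?_⟩
  have h1 : (fun n => (C n)⁻¹) = fun n : ℕ =>
      (2 : ℝ)⁻¹ ^ n • ((C 0)⁻¹ - Gᵀ * Sη⁻¹ * G) + Gᵀ * Sη⁻¹ * G := by
    funext n
    rw [← main n, sub_add_cancel]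
  rw [h1]
  have h2 : Tendsto (fun n : ℕ => (2 : ℝ)⁻¹ ^ n) atTop (nhds 0) :=
    tendsto_pow_atTop_nhds_zero_of_lt_one (by norm_num) (by norm_num)
  simpa using (h2.smul_const ((C 0)⁻¹ - Gᵀ * Sη⁻¹ * G)).add_const (Gᵀ * Sη⁻¹ * G)
end

section
/- For every n ≥ 0, the covariance matrices of the linear UKI iteration satisfy the Loewner-order bound C_n ⪯ 2ⁿ C_0, i.e. 2ⁿ C_0 − C_n is positive semidefinite. -/
open Matrix

theorem uki_gain_aux {a b : ℕ} (G : Matrix (Fin b) (Fin a) ℝ) (R : Matrix (Fin b) (Fin b) ℝ)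
    (hR : R.PosDef) (P : Matrix (Fin a) (Fin a) ℝ) (hP : P.PosSemidef) :
    (P * Gᵀ * (G * P * Gᵀ + R)⁻¹ * G * P).PosSemidef ∧
    (P - P * Gᵀ * (G * P * Gᵀ + R)⁻¹ * G * P).PosSemidef := by
  have hPt : Pᵀ = P := by simpa using hP.isHermitian.eq
  have hS : (G * P * Gᵀ + R).PosDef := by
    have h := hP.mul_mul_conjTranspose_same G
    rw [conjTranspose_eq_transpose_of_trivial] at h
    exact PosDef.posSemidef_add h hR
  have hdet : IsUnit (G * P * Gᵀ + R).det := (isUnit_iff_isUnit_det _).1 hS.isUnit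
  constructor
  · have h := hS.inv.posSemidef.conjTranspose_mul_mul_same (G * P)
    rw [conjTranspose_eq_transpose_of_trivial, transpose_mul, hPt] at h
    simpa only [Matrix.mul_assoc] using h
  · obtain ⟨K, hK⟩ : ∃ K, K = P * Gᵀ * (G * P * Gᵀ + R)⁻¹ := ⟨_, rfl⟩
    rw [← hK]
    have hKS : K * (G * P * Gᵀ + R) = P * Gᵀ := by
      rw [hK, Matrix.mul_assoc, nonsing_inv_mul _ hdet, Matrix.mul_one]
    have h := (hP.mul_mul_conjTranspose_same (1 - K * G)).add
      (hR.posSemidef.mul_mul_conjTranspose_same K)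
    simp only [conjTranspose_eq_transpose_of_trivial] at h
    have e : (1 - K * G) * P * (1 - K * G)ᵀ + K * R * Kᵀ
        = P - K * G * P + (K * (G * P * Gᵀ + R) - P * Gᵀ) * Kᵀ := by
      simp only [transpose_sub, transpose_mul, transpose_one, Matrix.mul_sub, Matrix.sub_mul,
        Matrix.mul_add, Matrix.add_mul, Matrix.mul_one, Matrix.one_mul, Matrix.mul_assoc]
      abel
    rw [e, hKS, sub_self, Matrix.zero_mul, add_zero] at h
    exact h

/-- **Growth bound for the linear UKI covariances.** For the linear UKI covariance iteration
(with `Σ_ω = C_n`, `Σ_ν = 2Σ_η`), one has the Loewner-order bound `C_n ⪯ 2ⁿ C_0` for every `n`,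
i.e. `2ⁿ C_0 − C_n` is positive semidefinite. -/
theorem linear_uki_covariance_growth_bound {Nθ Ny : ℕ}
    (G : Matrix (Fin Ny) (Fin Nθ) ℝ)
    (Sη : Matrix (Fin Ny) (Fin Ny) ℝ) (hSη : Sη.PosDef)
    (C : ℕ → Matrix (Fin Nθ) (Fin Nθ) ℝ) (hC0 : (C 0).PosDef)
    (hrec : ∀ n, C (n + 1) =
      (2 : ℝ) • C n -
        ((2 : ℝ) • C n) * Gᵀ * (G * ((2 : ℝ) • C n) * Gᵀ + (2 : ℝ) • Sη)⁻¹ * G *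
          ((2 : ℝ) • C n)) :
    ∀ n, ((2 : ℝ) ^ n • C 0 - C n).PosSemidef := by
  have h2 : (0 : ℝ) ≤ 2 := by norm_num
  have hR : ((2 : ℝ) • Sη).PosDef := hSη.smul (by norm_num)
  have hC : ∀ n, (C n).PosSemidef := by
    intro n
    induction n with
    | zero => exact hC0.posSemidef
    | succ n ih =>
      rw [hrec n]
      exact (uki_gain_aux G _ hR _ (ih.smul h2)).2
  intro n
  induction n with
  | zero => simpa using PosSemidef.zero
  | succ n ih =>
    have h := (ih.smul h2).add (uki_gain_aux G _ hR _ ((hC n).smul h2)).1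
    rw [hrec n]
    convert h using 1
    rw [smul_sub, smul_smul, pow_succ, mul_comm]
    abel
end

section
/- Assume G has trivial null space. Given y ∈ ℝ^{N_y} and an arbitrary initial mean m_0 ∈ ℝ^{N_θ}, define the linear UKI mean iteration m_{n+1} = m_n + C_{n+1} Gᵀ (2Σ_η)⁻¹ (y − G m_n), where C_n is the linear UKI covariance iteration. Then the sequence (m_n) converges exponentially fast to a limit m_∞: there exist K > 0 and r ∈ (0,1) with ‖m_n − m_∞‖ ≤ K rⁿ for all n, and the limit satisfies Gᵀ Σ_η⁻¹ (y − G m_∞) = 0, i.e. m_∞ is a minimizer of the least-squares functional Φ(θ) = ½ ‖Σ_η^{-1/2}(y − G θ)‖². -/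
open Matrix

lemma wood_aux {a b : ℕ} (G : Matrix (Fin b) (Fin a) ℝ) (H Q : Matrix (Fin a) (Fin a) ℝ)
    (S R : Matrix (Fin b) (Fin b) ℝ) (hS : IsUnit S.det) (hR : IsUnit R.det)
    (hHQ : H * Q = 1) (hSR : S = G * H * Gᵀ + R) :
    (H - H * Gᵀ * S⁻¹ * G * H) * (Q + Gᵀ * R⁻¹ * G) = 1 := by
  have h1 : S⁻¹ * (G * H * Gᵀ) * R⁻¹ = R⁻¹ - S⁻¹ := by
    have : G * H * Gᵀ = S - R := by rw [hSR]; abel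
    rw [this, Matrix.mul_sub, Matrix.sub_mul, Matrix.nonsing_inv_mul _ hS, Matrix.one_mul,
      Matrix.mul_assoc, Matrix.mul_nonsing_inv _ hR, Matrix.mul_one]
  have h2 : H * Gᵀ * S⁻¹ * G * H * (Gᵀ * R⁻¹ * G)
      = H * Gᵀ * (S⁻¹ * (G * H * Gᵀ) * R⁻¹) * G := by
    simp only [Matrix.mul_assoc]
  rw [Matrix.sub_mul, Matrix.mul_add, Matrix.mul_add, h2, h1,
    Matrix.mul_assoc (H * Gᵀ * S⁻¹ * G) H Q, hHQ, Matrix.mul_one, Matrix.mul_sub, Matrix.sub_mul]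
  simp only [Matrix.mul_assoc]
  abel

/-- **Exponential convergence of the linear UKI mean iteration.** Assume `G` has trivial null
space. Given data `y` and an arbitrary initial mean `m_0`, the linear UKI mean iteration
`m_{n+1} = m_n + C_{n+1} Gᵀ (2Σ_η)⁻¹ (y − G m_n)` (where `C_n` is the linear UKI covariance
iteration with `Σ_ω = C_n`, `Σ_ν = 2Σ_η`) converges exponentially fast to a limit `m_∞`
satisfying `Gᵀ Σ_η⁻¹ (y − G m_∞) = 0`, i.e. a minimizer of the least-squares functional
`Φ(θ) = ½‖Σ_η^{-1/2}(y − Gθ)‖²`. -/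
theorem linear_uki_mean_convergence {Nθ Ny : ℕ}
    (G : Matrix (Fin Ny) (Fin Nθ) ℝ)
    (hG : ∀ x : Fin Nθ → ℝ, G.mulVec x = 0 → x = 0)
    (Sη : Matrix (Fin Ny) (Fin Ny) ℝ) (hSη : Sη.PosDef)
    (C : ℕ → Matrix (Fin Nθ) (Fin Nθ) ℝ) (hC0 : (C 0).PosDef)
    (hrec : ∀ n, C (n + 1) =
      (2 : ℝ) • C n -
        ((2 : ℝ) • C n) * Gᵀ * (G * ((2 : ℝ) • C n) * Gᵀ + (2 : ℝ) • Sη)⁻¹ * G *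
          ((2 : ℝ) • C n))
    (y : Fin Ny → ℝ) (m : ℕ → Fin Nθ → ℝ)
    (hm : ∀ n, m (n + 1) =
      m n + ((C (n + 1)) * Gᵀ * ((2 : ℝ) • Sη)⁻¹).mulVec (y - G.mulVec (m n))) :
    ∃ minf : Fin Nθ → ℝ, ∃ K r : ℝ, 0 < K ∧ r ∈ Set.Ioo (0 : ℝ) 1 ∧
      (∀ n, ‖m n - minf‖ ≤ K * r ^ n) ∧
      (Gᵀ * Sη⁻¹).mulVec (y - G.mulVec minf) = 0 := by
  have hSu : IsUnit Sη.det := hSη.isUnit.map Matrix.detMonoidHom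
  set A : Matrix (Fin Nθ) (Fin Nθ) ℝ := Gᵀ * Sη⁻¹ * G with hA
  have hApd : A.PosDef := by
    have := hSη.inv.conjTranspose_mul_mul_same (B := G) (by
      intro x z hxz
      have : G.mulVec (x - z) = 0 := by rw [Matrix.mulVec_sub]; exact sub_eq_zero.2 hxz
      exact sub_eq_zero.1 (hG _ this))
    simpa [Matrix.conjTranspose_eq_transpose_of_trivial] using this
  have hAu : IsUnit A.det := hApd.isUnit.map Matrix.detMonoidHom
  have hR2 : ((2 : ℝ) • Sη)⁻¹ = (1/2 : ℝ) • Sη⁻¹ := by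
    apply Matrix.inv_eq_left_inv
    rw [Matrix.smul_mul, Matrix.mul_smul, smul_smul, Matrix.nonsing_inv_mul _ hSu]
    norm_num
  let P : ℕ → Matrix (Fin Nθ) (Fin Nθ) ℝ := fun n => A + ((1/2 : ℝ)^n) • ((C 0)⁻¹ - A)
  have hPs : ∀ n, P (n+1) = (1/2 : ℝ) • P n + (1/2 : ℝ) • A := by
    intro n
    simp only [P, pow_succ]
    module
  have hP0 : P 0 = (C 0)⁻¹ := by simp [P]
  have hPpd : ∀ n, (P n).PosDef := by
    intro n
    induction n with
    | zero => rw [hP0]; exact hC0.inv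
    | succ k ih =>
      rw [hPs]
      exact (ih.smul (by norm_num)).add (hApd.smul (by norm_num))
  have hCP : ∀ n, C n * P n = 1 := by
    intro n
    induction n with
    | zero => rw [hP0]; exact Matrix.mul_nonsing_inv _ (hC0.isUnit.map Matrix.detMonoidHom)
    | succ k ih =>
      have hCpd : (C k).PosDef := by
        have : (P k)⁻¹ = C k := Matrix.inv_eq_left_inv ih
        rw [← this]; exact (hPpd k).inv
      have hRpd : ((2 : ℝ) • Sη).PosDef := hSη.smul (by norm_num)
      have hHpd : ((2 : ℝ) • C k).PosDef := hCpd.smul (by norm_num)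
      have hSpd : (G * ((2 : ℝ) • C k) * Gᵀ + (2 : ℝ) • Sη).PosDef := by
        have := hHpd.posSemidef.mul_mul_conjTranspose_same G
        rw [Matrix.conjTranspose_eq_transpose_of_trivial] at this
        exact Matrix.PosDef.posSemidef_add this hRpd
      have := wood_aux G ((2 : ℝ) • C k) ((1/2 : ℝ) • P k) _ _
        (hSpd.isUnit.map Matrix.detMonoidHom) (hRpd.isUnit.map Matrix.detMonoidHom)
        (by rw [Matrix.smul_mul, Matrix.mul_smul, smul_smul, ih]; norm_num) rfl
      rw [hrec, hPs, ← this, hR2, hA, Matrix.mul_smul Gᵀ, Matrix.smul_mul _ (Gᵀ * Sη⁻¹)]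
  have hPC : ∀ n, P n * C n = 1 := fun n => mul_eq_one_comm.1 (hCP n)
  let minf : Fin Nθ → ℝ := A⁻¹.mulVec ((Gᵀ * Sη⁻¹).mulVec y)
  have hminf : (Gᵀ * Sη⁻¹).mulVec (y - G.mulVec minf) = 0 := by
    rw [Matrix.mulVec_sub, Matrix.mulVec_mulVec, ← hA, Matrix.mulVec_mulVec,
      Matrix.mul_nonsing_inv _ hAu, Matrix.one_mulVec, sub_self]
  have hres : ∀ x, (Gᵀ * Sη⁻¹).mulVec (y - G.mulVec x) = - A.mulVec (x - minf) := by
    intro x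
    have : y - G.mulVec x = (y - G.mulVec minf) - G.mulVec (x - minf) := by
      rw [Matrix.mulVec_sub]; abel
    rw [this, Matrix.mulVec_sub, hminf, Matrix.mulVec_mulVec, ← hA, zero_sub]
  have hstep : ∀ n, (P (n+1)).mulVec (m (n+1) - minf) = (1/2 : ℝ) • (P n).mulVec (m n - minf) := by
    intro n
    have h1 : m (n+1) - minf
        = (m n - minf) - (C (n+1)).mulVec ((1/2 : ℝ) • A.mulVec (m n - minf)) := by
      rw [hm, hR2, Matrix.mul_smul, Matrix.mul_assoc, Matrix.smul_mulVec,
        ← Matrix.mulVec_mulVec, hres, Matrix.mulVec_neg, Matrix.mulVec_smul, smul_neg]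
      abel
    rw [h1, Matrix.mulVec_sub, Matrix.mulVec_mulVec, hPC, Matrix.one_mulVec, hPs,
      Matrix.add_mulVec, Matrix.smul_mulVec, Matrix.smul_mulVec]
    abel
  let v := (P 0).mulVec (m 0 - minf)
  have hPe : ∀ n, (P n).mulVec (m n - minf) = ((1/2 : ℝ)^n) • v := by
    intro n
    induction n with
    | zero => simp [v]
    | succ k ih => rw [hstep, ih, smul_smul, pow_succ']
  have he : ∀ n, m n - minf = ((1/2 : ℝ)^n) • (C n).mulVec v := by
    intro n
    rw [← Matrix.mulVec_smul, ← hPe, Matrix.mulVec_mulVec, hCP, Matrix.one_mulVec]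
  have hPlim : Filter.Tendsto P Filter.atTop (nhds A) := by
    have h : Filter.Tendsto (fun n : ℕ => (1/2 : ℝ)^n) Filter.atTop (nhds 0) :=
      tendsto_pow_atTop_nhds_zero_of_lt_one (by norm_num) (by norm_num)
    have := (h.smul_const ((C 0)⁻¹ - A)).const_add A
    simpa [P] using this
  have hClim : Filter.Tendsto (fun n => (C n).mulVec v) Filter.atTop (nhds (A⁻¹.mulVec v)) := by
    have hinv : ContinuousAt (fun M : Matrix (Fin Nθ) (Fin Nθ) ℝ => M⁻¹) A := by
      apply continuousAt_matrix_inv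
      rw [Ring.inverse_eq_inv']
      exact continuousAt_inv₀ hAu.ne_zero
    have h2 : Filter.Tendsto C Filter.atTop (nhds A⁻¹) := by
      have := hinv.tendsto.comp hPlim
      refine this.congr fun n => ?_
      exact Matrix.inv_eq_left_inv (hCP n)
    exact ((continuous_id.matrix_mulVec continuous_const).tendsto A⁻¹).comp h2
  obtain ⟨K, hK⟩ := hClim.norm.bddAbove_range
  refine ⟨minf, |K| + 1, 1/2, by positivity, ⟨by norm_num, by norm_num⟩, ?_, hminf⟩
  intro n
  have hKn : ‖(C n).mulVec v‖ ≤ K := hK ⟨n, rfl⟩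
  rw [he, norm_smul, mul_comm, norm_pow, Real.norm_of_nonneg (by norm_num : (0:ℝ) ≤ 1/2)]
  gcongr
  linarith [le_abs_self K]
end

section
/- Let G : ℝ^N → ℝ^N be a differentiable bijection with derivative (Jacobian matrix) dG(θ) at θ, let y ∈ ℝ^N, and let Σ_η be a symmetric positive definite N × N matrix. Suppose m* ∈ ℝ^N and the symmetric N × N matrix C* form a stationary point of the ExKI iteration with Σ_ω = C* and Σ_ν = 2Σ_η, i.e., setting Ĉ = 2C*: m* = m* + Ĉ dG(m*)ᵀ (dG(m*) Ĉ dG(m*)ᵀ + 2Σ_η)⁻¹ (y − G(m*)) and C* = Ĉ − Ĉ dG(m*)ᵀ (dG(m*) Ĉ dG(m*)ᵀ + 2Σ_η)⁻¹ dG(m*) Ĉ. If both C* and dG(m*) are invertible, then G(m*) = y (equivalently m* = G⁻¹(y)) and C*⁻¹ = dG(m*)ᵀ Σ_η⁻¹ dG(m*). -/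
open Matrix

/-- **Stationary points of the ExKI iteration.** Let `G : ℝ^N → ℝ^N` be a differentiable
bijection with Jacobian matrix `dG(θ)`, let `y ∈ ℝ^N`, and let `Σ_η` be symmetric positive
definite. If `(m*, C*)` (with `C*` symmetric) is a stationary point of the ExKI iteration with
`Σ_ω = C*`, `Σ_ν = 2Σ_η` (so `Ĉ = 2C*`), and both `C*` and `dG(m*)` are invertible, then
`G(m*) = y` and `C*⁻¹ = dG(m*)ᵀ Σ_η⁻¹ dG(m*)`. -/
theorem exki_stationary_point {N : ℕ}
    (G : (Fin N → ℝ) → (Fin N → ℝ)) (hGbij : Function.Bijective G)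
    (dG : (Fin N → ℝ) → Matrix (Fin N) (Fin N) ℝ)
    (hdG : ∀ θ, HasFDerivAt G
      (LinearMap.toContinuousLinearMap (Matrix.toLin' (dG θ))) θ)
    (y : Fin N → ℝ)
    (Sη : Matrix (Fin N) (Fin N) ℝ) (hSη : Sη.PosDef)
    (mstar : Fin N → ℝ) (Cstar : Matrix (Fin N) (Fin N) ℝ)
    (hCsym : Cstar.IsHermitian)
    (hmfix : mstar = mstar +
      (((2 : ℝ) • Cstar) * (dG mstar)ᵀ *
        ((dG mstar) * ((2 : ℝ) • Cstar) * (dG mstar)ᵀ + (2 : ℝ) • Sη)⁻¹).mulVec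
        (y - G mstar))
    (hCfix : Cstar = (2 : ℝ) • Cstar -
      ((2 : ℝ) • Cstar) * (dG mstar)ᵀ *
        ((dG mstar) * ((2 : ℝ) • Cstar) * (dG mstar)ᵀ + (2 : ℝ) • Sη)⁻¹ *
        (dG mstar) * ((2 : ℝ) • Cstar))
    (hCunit : IsUnit Cstar.det) (hdGunit : IsUnit (dG mstar).det) :
    G mstar = y ∧ Cstar⁻¹ = (dG mstar)ᵀ * Sη⁻¹ * (dG mstar) := by
  clear hdG hGbij
  generalize G mstar = g at *
  generalize dG mstar = J at *
  generalize hM : J * ((2 : ℝ) • Cstar) * Jᵀ + (2 : ℝ) • Sη = M at *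
  have h1 : ((2 : ℝ) • Cstar) * Jᵀ * M⁻¹ * J * ((2 : ℝ) • Cstar) = Cstar := by
    have h : Cstar + ((2 : ℝ) • Cstar) * Jᵀ * M⁻¹ * J * ((2 : ℝ) • Cstar) = (2 : ℝ) • Cstar :=
      eq_sub_iff_add_eq.mp hCfix
    rw [two_smul ℝ Cstar] at h ⊢
    exact add_left_cancel h
  have h2 : (((2 : ℝ) • Cstar) * Jᵀ * M⁻¹) * ((2 : ℝ) • J) = 1 := by
    have h := congrArg (fun X => X * Cstar⁻¹) h1
    simp only [Matrix.mul_smul, Matrix.smul_mul] at h ⊢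
    rwa [Matrix.mul_nonsing_inv_cancel_right _ _ hCunit, Matrix.mul_nonsing_inv _ hCunit] at h
  have h3 : ((2 : ℝ) • J) * (((2 : ℝ) • Cstar) * Jᵀ * M⁻¹) = 1 := mul_eq_one_comm.mp h2
  constructor
  · have h4 : (((2 : ℝ) • Cstar) * Jᵀ * M⁻¹).mulVec (y - g) = 0 := by
      simpa using hmfix.symm
    have h5 : y - g = 0 := by
      rw [← Matrix.one_mulVec (y - g), ← h3, ← Matrix.mulVec_mulVec, h4, Matrix.mulVec_zero]
    exact (sub_eq_zero.mp h5).symm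
  · have h6 : (((2 : ℝ) • J) * (((2 : ℝ) • Cstar) * Jᵀ)) * M⁻¹ = 1 := by
      rw [← h3]; simp only [Matrix.mul_assoc]
    have hMu : IsUnit M.det :=
      Matrix.isUnit_nonsing_inv_det_iff.mp (Matrix.isUnit_det_of_left_inverse h6)
    have h7 : ((2 : ℝ) • J) * (((2 : ℝ) • Cstar) * Jᵀ) = M := by
      have h := congrArg (fun X => X * M) h6
      simpa only [Matrix.nonsing_inv_mul_cancel_right _ _ hMu, Matrix.one_mul] using h
    have h8 : Sη = J * Cstar * Jᵀ := by
      rw [← hM] at h7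
      simp only [Matrix.mul_smul, Matrix.smul_mul, ← Matrix.mul_assoc] at h7
      ext i j
      have := congrFun (congrFun h7 i) j
      simp only [Matrix.smul_apply, Matrix.add_apply, smul_eq_mul] at this
      linarith
    have hJt : IsUnit Jᵀ.det := by rwa [Matrix.det_transpose]
    rw [h8, Matrix.mul_inv_rev, Matrix.mul_inv_rev, Matrix.mul_nonsing_inv_cancel_left _ _ hJt,
      Matrix.nonsing_inv_mul_cancel_right _ _ hdGunit]
end
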